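/- arXiv:2511.12327 — 3 statements merged into one kernel-verified Lean document; each statement's English description precedes it below -/
import Mathlib

section
/- Let X ⊆ ℝ be such that (X[≤])² is a normal topological space. If there exists a strictly decreasing bijection f : X → X that is a homeomorphism of X with respect to the Euclidean subspace topology, then X is a Q-set. -/
/-- The Sorgenfrey (lower limit) topology on `ℝ`, generated by half-open
intervals `[a, b)` with `a < b`. -/
def sorgenfrey : TopologicalSpace ℝ :=
  TopologicalSpace.generateFrom {s : Set ℝ | ∃ a b : ℝ, a < b ∧ s = Set.Ico a b}

/-- The Sorgenfrey subspace topology on a set of reals `X`, i.e. `X[≤]`. -/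
def sorgenfreySub (X : Set ℝ) : TopologicalSpace X :=
  sorgenfrey.induced Subtype.val

/-- The product topology `(X[≤])²` on `X × X`. -/
def sorgenfreySq (X : Set ℝ) : TopologicalSpace (X × X) :=
  @instTopologicalSpaceProd X X (sorgenfreySub X) (sorgenfreySub X)

/-- A set of reals `X` is a Q-set if every subset of `X` is a relative `Gδ`-set
in `X` with respect to the Euclidean subspace topology. -/
def IsQSet (X : Set ℝ) : Prop :=
  ∀ A : Set ℝ, A ⊆ X → IsGδ (Subtype.val ⁻¹' A : Set X)

/-!
The Sorgenfrey square refines the Euclidean topology of the plane by replacing the neighbourhoods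
of `p` with the traces of its neighbourhoods on the quadrant `Ici p`. A quadrant whose corner lies
on the graph of a strictly decreasing map meets the graph only in that corner. When the map is
continuous, every part of its graph is therefore closed, and normality separates the graph over `A`
from the graph over `Aᶜ` by disjoint open sets `U` and `V`.

The set `V` is the union over `n` of the sets `B n` of points `p` such that
`Metric.ball p (1 / (n + 1)) ∩ Ici p ⊆ V`. The Euclidean closure of `B n` misses `U`: if
`q ∈ B n` is close enough to a point `p ∈ U`, then `p ⊔ q` lies in both `U` and `V`. The
complements of these closures thus intersect in a Euclidean Gδ set, which contains the graph over
`A` and misses the graph over `Aᶜ`; its preimage under `x ↦ (x, f x)` is `A`.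
-/

open Filter Set Topology TopologicalSpace

section LowerLimit

variable {α β : Type*} [TopologicalSpace α] [TopologicalSpace β]

/-- The lower limit topology of a topological space with a preorder, in which a set is open iff it
is a right neighbourhood of each of its points. It is the Sorgenfrey topology for the Euclidean
topology of `ℝ`, of a set of reals, or of a product of such sets with the product order. -/
abbrev lowerLimitTopology (α : Type*) [TopologicalSpace α] [Preorder α] : TopologicalSpace α :=
  .mkOfNhds fun x ↦ 𝓝[≥] x

theorem isOpen_lowerLimitTopology_iff [Preorder α] {U : Set α} :
    IsOpen[lowerLimitTopology α] U ↔ ∀ x ∈ U, U ∈ 𝓝[≥] x :=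
  Iff.rfl

theorem nhds_lowerLimitTopology [Preorder α] (x : α) :
    @nhds α (lowerLimitTopology α) x = 𝓝[≥] x := by
  refine nhds_mkOfNhds _ x (fun y ↦ pure_le_nhdsWithin self_mem_Ici) fun a s hs ↦ ?_
  filter_upwards [eventually_eventually_nhdsWithin.2 hs, self_mem_nhdsWithin] with y hy hay
  exact nhdsWithin_mono y (Ici_subset_Ici.2 hay) hy

theorem induced_lowerLimitTopology [Preorder α] [Preorder β] (e : α ↪o β) (he : IsInducing e) :
    (lowerLimitTopology β).induced e = lowerLimitTopology α := by
  refine ext_nhds fun x ↦ ?_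
  rw [@nhds_induced _ _ (lowerLimitTopology β), nhds_lowerLimitTopology, nhds_lowerLimitTopology,
    nhdsWithin, nhdsWithin, comap_inf, comap_principal, e.preimage_Ici, he.nhds_eq_comap]

theorem prod_lowerLimitTopology [Preorder α] [Preorder β] :
    @instTopologicalSpaceProd α β (lowerLimitTopology α) (lowerLimitTopology β) =
      lowerLimitTopology (α × β) := by
  refine ext_nhds fun ⟨x, y⟩ ↦ ?_
  rw [@nhds_prod_eq α β (lowerLimitTopology α) (lowerLimitTopology β), nhds_lowerLimitTopology,
    nhds_lowerLimitTopology, nhds_lowerLimitTopology, ← nhdsWithin_prod_eq, Ici_prod_Ici]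

theorem isClosed_lowerLimitTopology_graphOn [PartialOrder α] [PartialOrder β]
    [OrderClosedTopology β] {f : α → β} (hf : Continuous f) (hanti : StrictAnti f) (A : Set α) :
    IsClosed[lowerLimitTopology (α × β)] (A.graphOn f) := by
  rw [← @isOpen_compl_iff _ _ (lowerLimitTopology _), isOpen_lowerLimitTopology_iff]
  rintro ⟨a, b⟩ hab
  by_cases hfab : f a ≤ b
  · filter_upwards [self_mem_nhdsWithin]
    rintro _ ⟨hax : a ≤ _, hbx : b ≤ _⟩ ⟨x, hxA, rfl⟩
    obtain rfl : a = x := hax.eq_of_not_lt fun hlt ↦ (hfab.trans hbx).not_gt (hanti hlt)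
    exact hab ⟨a, hxA, Prod.ext rfl (hfab.antisymm hbx)⟩
  · have hopen : IsOpen {q : α × β | ¬ f q.1 ≤ q.2} :=
      (isClosed_le (hf.comp continuous_fst) continuous_snd).isOpen_compl
    filter_upwards [mem_nhdsWithin_of_mem_nhds (hopen.mem_nhds hfab)] with q hq hgraph
    exact hq (mem_graphOn.1 hgraph).2.le

instance instContinuousSupProd [Max α] [Max β] [ContinuousSup α] [ContinuousSup β] :
    ContinuousSup (α × β) where
  continuous_sup :=
    ((continuous_fst.comp continuous_fst).sup (continuous_fst.comp continuous_snd)).prodMk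
      ((continuous_snd.comp continuous_fst).sup (continuous_snd.comp continuous_snd))

theorem tendsto_sup_nhdsGE [SemilatticeSup α] [ContinuousSup α] (p : α) :
    Tendsto (p ⊔ ·) (𝓝 p) (𝓝[≥] p) :=
  tendsto_nhdsWithin_iff.2 ⟨(continuous_const.sup continuous_id).tendsto' _ _ (sup_idem p),
    .of_forall fun _ ↦ le_sup_left⟩

theorem exists_isGδ_of_disjoint_lowerLimitTopology [SemilatticeSup α] [ContinuousSup α]
    [PseudoMetrizableSpace α] {U V : Set α} (hU : IsOpen[lowerLimitTopology α] U)
    (hV : IsOpen[lowerLimitTopology α] V) (hUV : Disjoint U V) :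
    ∃ G, IsGδ G ∧ U ⊆ G ∧ Disjoint G V := by
  rw [isOpen_lowerLimitTopology_iff] at hU hV
  let := pseudoMetrizableSpacePseudoMetric α
  let B (n : ℕ) : Set α := {p | Metric.ball p (1 / (n + 1)) ∩ Ici p ⊆ V}
  have hVB : V ⊆ ⋃ n, B n := fun p hp ↦ by
    obtain ⟨ε, hε, hball⟩ := Metric.mem_nhdsWithin_iff.1 (hV p hp)
    obtain ⟨n, hn⟩ := exists_nat_one_div_lt hε
    exact mem_iUnion.2 ⟨n, (inter_subset_inter_left _ (Metric.ball_subset_ball hn.le)).trans hball⟩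
  have hUB (n : ℕ) : U ⊆ (closure (B n))ᶜ := fun p hp hcl ↦ by
    have hsupU : ∀ᶠ q in 𝓝 p, p ⊔ q ∈ U := (tendsto_sup_nhdsGE p).eventually_mem (hU p hp)
    have hdist : ∀ᶠ q in 𝓝 p, dist (p ⊔ q) q < 1 / (n + 1) := by
      refine Tendsto.eventually_lt_const ?_
        (((tendsto_sup_nhdsGE p).mono_right nhdsWithin_le_nhds).dist tendsto_id)
      simpa only [id, dist_self] using Nat.one_div_pos_of_nat
    obtain ⟨q, hqB, hqU, hq⟩ :=
      ((mem_closure_iff_frequently.1 hcl).and_eventually (hsupU.and hdist)).exists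
    exact hUV.notMem_of_mem_left hqU (hqB ⟨hq, le_sup_right⟩)
  refine ⟨⋂ n, (closure (B n))ᶜ, .iInter_of_isOpen fun n ↦ isClosed_closure.isOpen_compl,
    subset_iInter hUB, ?_⟩
  rw [← compl_iUnion, disjoint_compl_left_iff_subset]
  exact hVB.trans (iUnion_mono fun n ↦ subset_closure)

end LowerLimit

theorem sorgenfrey_eq_lowerLimitTopology : sorgenfrey = lowerLimitTopology ℝ := by
  apply le_antisymm
  · intro U hU
    refine (@isOpen_iff_forall_mem_open ℝ sorgenfrey U).2 fun x hx ↦ ?_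
    obtain ⟨b, hxb, hIco⟩ := mem_nhdsGE_iff_exists_Ico_subset.1
      (isOpen_lowerLimitTopology_iff.1 hU x hx)
    exact ⟨Ico x b, hIco, isOpen_generateFrom_of_mem ⟨x, b, hxb, rfl⟩, left_mem_Ico.2 hxb⟩
  · refine le_generateFrom ?_
    rintro _ ⟨a, b, -, rfl⟩
    exact isOpen_lowerLimitTopology_iff.2 fun x hx ↦ Ico_mem_nhdsGE_of_mem hx

theorem sorgenfreySq_eq_lowerLimitTopology (X : Set ℝ) :
    sorgenfreySq X = lowerLimitTopology (X × X) := by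
  have hsub : sorgenfreySub X = lowerLimitTopology X := by
    rw [sorgenfreySub, sorgenfrey_eq_lowerLimitTopology]
    exact induced_lowerLimitTopology (OrderEmbedding.subtype (· ∈ X)) .subtypeVal
  rw [sorgenfreySq, hsub, prod_lowerLimitTopology]

theorem stmt2_general {α β : Type*} [TopologicalSpace α] [SemilatticeSup α] [ContinuousSup α]
    [PseudoMetrizableSpace α] [TopologicalSpace β] [SemilatticeSup β] [ContinuousSup β]
    [OrderClosedTopology β] [PseudoMetrizableSpace β]
    (hnorm : @NormalSpace (α × β) (lowerLimitTopology (α × β))) {f : α → β} (hf : Continuous f)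
    (hanti : StrictAnti f) (A : Set α) : IsGδ A := by
  obtain ⟨U, V, hU, hV, hAU, hAV, hUV⟩ :=
    @NormalSpace.normal _ (lowerLimitTopology _) hnorm (A.graphOn f) (Aᶜ.graphOn f)
      (isClosed_lowerLimitTopology_graphOn hf hanti A)
      (isClosed_lowerLimitTopology_graphOn hf hanti Aᶜ)
      (disjoint_left.2 fun _ hA hAc ↦ (mem_graphOn.1 hAc).1 (mem_graphOn.1 hA).1)
  obtain ⟨G, hG, hUG, hGV⟩ := exists_isGδ_of_disjoint_lowerLimitTopology hU hV hUV
  have hA : A = (fun x ↦ (x, f x)) ⁻¹' G := by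
    ext x
    refine ⟨fun hx ↦ hUG (hAU (mem_image_of_mem _ hx)), fun hx ↦ ?_⟩
    by_contra hxA
    exact hGV.notMem_of_mem_left hx (hAV (mem_image_of_mem _ hxA))
  rw [hA]
  exact hG.preimage (continuous_id.prodMk hf)

/-- If `(X[≤])²` is normal and there is a strictly decreasing
bijection `f : X → X` which is a homeomorphism for the Euclidean subspace
topology, then `X` is a Q-set. -/
theorem stmt2 (X : Set ℝ) (hnorm : @NormalSpace (X × X) (sorgenfreySq X))
    (f : X ≃ₜ X)
    (hf : ∀ x y : X, (x : ℝ) < (y : ℝ) → (f y : ℝ) < (f x : ℝ)) :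
    IsQSet X := by
  intro A _
  rw [sorgenfreySq_eq_lowerLimitTopology] at hnorm
  exact stmt2_general hnorm f.continuous hf _
end

section
/- Assume Baumgartner's Axiom. If X ⊆ ℝ is uncountable and (X[≤])² is a normal topological space, then X contains an uncountable Q-set. -/
/-- A set of reals `Y` is ℵ₁-dense if its intersection with every nonempty open
interval has cardinality ℵ₁. -/
def Aleph1Dense (Y : Set ℝ) : Prop :=
  ∀ a b : ℝ, a < b → Cardinal.mk ↥(Y ∩ Set.Ioo a b) = Cardinal.aleph 1

/-- Baumgartner's Axiom: any two ℵ₁-dense sets of reals are order isomorphic. -/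
def BaumgartnerAxiom : Prop :=
  ∀ Y Z : Set ℝ, Aleph1Dense Y → Aleph1Dense Z → Nonempty (↥Y ≃o ↥Z)

/-!
Let `Y ⊆ X` have size `ℵ₁`. Then `Y + ℚ` is `ℵ₁`-dense, so the axiom gives an isomorphism with
`-(Y + ℚ)`, that is, a strictly decreasing self-map of `Y + ℚ`. After a rational shift it maps an
uncountable part of `Y` into `X`, and it is continuous on a co-countable subset `Q` of that part.

The graph of a strictly decreasing `f : Q → X` is an antichain in `X × X`, and every antichain is
closed in `(X[≤])²`. For `A ⊆ Q`, normality thus separates the graphs of `f` over `A` and over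
`Q \ A` by disjoint open sets of `(X[≤])²`. Disjoint open sets of `(X[≤])²` can be separated by a
Euclidean `Gδ`-set, and pulling it back along the continuous map `y ↦ (y, f y)` yields `A`.
-/

open Set Topology
open scoped Cardinal Pointwise

theorem t1Space_of_isClopen_Ici {α : Type*} [LinearOrder α] [TopologicalSpace α]
    (hα : ∀ a : α, IsClopen (Ici a)) : T1Space α := by
  refine t1Space_iff_exists_open.2 fun x y hxy => ?_
  rcases hxy.lt_or_gt with h | h
  · exact ⟨(Ici y)ᶜ, (hα y).compl.isOpen, not_le.2 h, not_not.2 le_rfl⟩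
  · exact ⟨Ici x, (hα x).isOpen, le_rfl, not_le.2 h⟩

theorem finite_inter_Ici_of_isAntichain {α β : Type*} [LinearOrder α] [LinearOrder β]
    {G : Set (α × β)} (hG : IsAntichain (· ≤ ·) G) {p : α × β}
    (hp : ∀ g ∈ G, p.1 < g.1 → ¬p.2 < g.2) : (G ∩ Ici p).Finite := by
  have hfst : {g ∈ G | g.1 = p.1}.Subsingleton := fun g hg g' hg' => by
    rcases le_total g.2 g'.2 with h | h
    · exact hG.eq hg.1 hg'.1 ⟨(hg.2.trans hg'.2.symm).le, h⟩
    · exact (hG.eq hg'.1 hg.1 ⟨(hg'.2.trans hg.2.symm).le, h⟩).symm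
  have hsnd : {g ∈ G | g.2 = p.2}.Subsingleton := fun g hg g' hg' => by
    rcases le_total g.1 g'.1 with h | h
    · exact hG.eq hg.1 hg'.1 ⟨h, (hg.2.trans hg'.2.symm).le⟩
    · exact (hG.eq hg'.1 hg.1 ⟨h, (hg'.2.trans hg.2.symm).le⟩).symm
  refine (hfst.finite.union hsnd.finite).subset fun g ⟨hgG, hpg⟩ => ?_
  rcases hpg.1.eq_or_lt with h | h
  · exact Or.inl ⟨hgG, h.symm⟩
  · exact Or.inr ⟨hgG, (hpg.2.eq_or_lt.resolve_right (hp g hgG h)).symm⟩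

theorem isClosed_of_isAntichain {α β : Type*} [LinearOrder α] [TopologicalSpace α]
    [LinearOrder β] [TopologicalSpace β] (hα : ∀ a : α, IsClopen (Ici a))
    (hβ : ∀ b : β, IsClopen (Ici b)) {G : Set (α × β)} (hG : IsAntichain (· ≤ ·) G) :
    IsClosed G := by
  have := t1Space_of_isClopen_Ici hα
  have := t1Space_of_isClopen_Ici hβ
  refine isOpen_compl_iff.1 (isOpen_iff_mem_nhds.2 fun p hpG => ?_)
  have hIci : Ici p ∈ 𝓝 p := by
    rw [Ici_prod_eq]
    exact prod_mem_nhds ((hα p.1).isOpen.mem_nhds le_rfl) ((hβ p.2).isOpen.mem_nhds le_rfl)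
  by_cases! h : ∃ g ∈ G, p.1 < g.1 ∧ p.2 < g.2
  · obtain ⟨g, hg, h₁, h₂⟩ := h
    have hIio : (Ici g.1)ᶜ ×ˢ (Ici g.2)ᶜ ∈ 𝓝 p :=
      prod_mem_nhds ((hα g.1).compl.isOpen.mem_nhds (not_le.2 h₁))
        ((hβ g.2).compl.isOpen.mem_nhds (not_le.2 h₂))
    filter_upwards [hIio] with q hq hqG
    have hqg : q = g := hG.eq hqG hg ⟨(not_le.1 hq.1).le, (not_le.1 hq.2).le⟩
    exact hq.1 (hqg ▸ le_rfl)
  · have hfin : (G ∩ Ici p).Finite :=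
      finite_inter_Ici_of_isAntichain hG fun g hg h₁ => not_lt.2 (h g hg h₁)
    filter_upwards [hIci, hfin.isClosed.isOpen_compl.mem_nhds fun hp => hpG hp.1] with q hpq hq hqG
    exact hq ⟨hqG, hpq⟩

theorem isAntichain_range_prodMk {α β γ : Type*} [LinearOrder α] [Preorder β] [Preorder γ]
    {g : α → β} {f : α → γ} (hg : StrictMono g) (hf : StrictAnti f) :
    IsAntichain (· ≤ ·) (range fun x => (g x, f x)) := by
  rintro _ ⟨x, rfl⟩ _ ⟨y, rfl⟩ hne ⟨hgxy, hfxy⟩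
  rcases lt_trichotomy x y with h | rfl | h
  · exact (hf h).not_ge hfxy
  · exact hne rfl
  · exact (hg h).not_ge hgxy

instance continuousSup_prod {α β : Type*} [TopologicalSpace α] [Max α] [ContinuousSup α]
    [TopologicalSpace β] [Max β] [ContinuousSup β] : ContinuousSup (α × β) where
  continuous_sup := .prodMk (.sup (by fun_prop) (by fun_prop)) (.sup (by fun_prop) (by fun_prop))

-- If `p ∈ U` is a limit of points `q` with `ball q ε ∩ Ici q ⊆ V`, then `p ⊔ q` lies in `U ∩ V`
-- for `q` close to `p`.
theorem exists_isGδ_superset_disjoint {α : Type*} [PseudoMetricSpace α] [SemilatticeSup α]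
    [ContinuousSup α] {U V : Set α} (hU : ∀ p ∈ U, U ∈ 𝓝[≥] p) (hV : ∀ p ∈ V, V ∈ 𝓝[≥] p)
    (hUV : Disjoint U V) : ∃ H, IsGδ H ∧ U ⊆ H ∧ Disjoint H V := by
  let S (n : ℕ) : Set α := {q | Metric.ball q (1 / (n + 1)) ∩ Ici q ⊆ V}
  refine ⟨⋂ n, (closure (S n))ᶜ,
    .iInter fun n => isClosed_closure.isOpen_compl.isGδ, fun p hp => ?_, ?_⟩
  · refine mem_iInter.2 fun n hcl => ?_
    have hsup : Filter.Tendsto (fun q => p ⊔ q) (𝓝 p) (𝓝[≥] p) :=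
      tendsto_nhdsWithin_iff.2
        ⟨(show Continuous fun q => p ⊔ q by fun_prop).tendsto' p p (sup_idem p),
          .of_forall fun _ => le_sup_left⟩
    have hcont : Continuous fun q => dist (p ⊔ q) q := by fun_prop
    have hdist : ∀ᶠ q in 𝓝 p, dist (p ⊔ q) q < 1 / (n + 1) := by
      refine hcont.continuousAt.eventually_lt_const ?_
      simp only [sup_idem, dist_self]
      positivity
    obtain ⟨q, hqS, hqU, hq⟩ :=
      ((mem_closure_iff_frequently.1 hcl).and_eventually
        ((hsup.eventually_mem (hU p hp)).and hdist)).exists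
    exact hUV.notMem_of_mem_left hqU (hqS ⟨hq, le_sup_right⟩)
  · refine disjoint_right.2 fun p hp hpH => ?_
    obtain ⟨ε, hε, hball⟩ := Metric.mem_nhdsWithin_iff.1 (hV p hp)
    obtain ⟨n, hn⟩ := exists_nat_one_div_lt hε
    have hpS : p ∈ S n := (inter_subset_inter_left _ (Metric.ball_subset_ball hn.le)).trans hball
    exact mem_iInter.1 hpH n (subset_closure hpS)

theorem isClopen_sorgenfrey_Ici (a : ℝ) : @IsClopen ℝ sorgenfrey (Ici a) := by
  have hIco {c d : ℝ} (hcd : c < d) : IsOpen[sorgenfrey] (Ico c d) := .basic _ ⟨c, d, hcd, rfl⟩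
  have hIio : IsOpen[sorgenfrey] (Iio a) :=
    (@isOpen_iff_forall_mem_open ℝ sorgenfrey _).2 fun x hx =>
      ⟨Ico x a, Ico_subset_Iio_self, hIco hx, le_rfl, hx⟩
  have hIci : IsOpen[sorgenfrey] (Ici a) :=
    (@isOpen_iff_forall_mem_open ℝ sorgenfrey _).2 fun x hx =>
      have hx1 : x < x + 1 := lt_add_one x
      ⟨Ico a (x + 1), Ico_subset_Ici_self, hIco (hx1.trans_le' hx), hx, hx1⟩
  exact ⟨(@isOpen_compl_iff _ _ sorgenfrey).1 (by rwa [compl_Ici]), hIci⟩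

theorem isClopen_sorgenfreySub_Ici {X : Set ℝ} (a : X) : @IsClopen X (sorgenfreySub X) (Ici a) :=
  @IsClopen.preimage X ℝ (sorgenfreySub X) sorgenfrey _ (isClopen_sorgenfrey_Ici a) _
    (@continuous_induced_dom _ _ _ sorgenfrey)

theorem mem_nhdsGE_of_isOpen_sorgenfrey {s : Set ℝ} (hs : IsOpen[sorgenfrey] s) {x : ℝ}
    (hx : x ∈ s) : s ∈ 𝓝[≥] x := by
  induction hs with
  | basic s h =>
    obtain ⟨a, b, -, rfl⟩ := h
    exact Filter.mem_of_superset (Ico_mem_nhdsGE hx.2) (Ico_subset_Ico_left hx.1)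
  | univ => exact Filter.univ_mem
  | inter s t _ _ ihs iht => exact Filter.inter_mem (ihs hx.1) (iht hx.2)
  | sUnion S _ ih =>
    obtain ⟨t, ht, hxt⟩ := hx
    exact Filter.mem_of_superset (ih t ht hxt) (subset_sUnion_of_mem ht)

theorem mem_nhdsGE_of_isOpen_sorgenfreySub {X : Set ℝ} {s : Set X}
    (hs : IsOpen[sorgenfreySub X] s) {x : X} (hx : x ∈ s) : s ∈ 𝓝[≥] x := by
  obtain ⟨t, ht, rfl⟩ := hs
  exact continuous_subtype_val.continuousWithinAt.preimage_mem_nhdsWithin''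
    (mem_nhdsGE_of_isOpen_sorgenfrey ht hx) rfl

theorem mem_nhdsGE_of_isOpen_sorgenfreySq {X : Set ℝ} {U : Set (X × X)}
    (hU : IsOpen[sorgenfreySq X] U) {p : X × X} (hp : p ∈ U) : U ∈ 𝓝[≥] p := by
  obtain ⟨u, v, hu, hv, hpu, hpv, huv⟩ :=
    (@isOpen_prod_iff X X (sorgenfreySub X) (sorgenfreySub X) U).1 hU p.1 p.2 hp
  rw [Ici_prod_eq, nhdsWithin_prod_eq]
  exact Filter.mem_of_superset (Filter.prod_mem_prod (mem_nhdsGE_of_isOpen_sorgenfreySub hu hpu)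
    (mem_nhdsGE_of_isOpen_sorgenfreySub hv hpv)) huv

theorem isClosed_sorgenfreySq_of_isAntichain {X : Set ℝ} {G : Set (X × X)}
    (hG : IsAntichain (· ≤ ·) G) : IsClosed[sorgenfreySq X] G :=
  @isClosed_of_isAntichain X X _ (sorgenfreySub X) _ (sorgenfreySub X) isClopen_sorgenfreySub_Ici
    isClopen_sorgenfreySub_Ici G hG

theorem exists_isGδ_inter_eq_of_isAntichain {X : Set ℝ}
    (hnorm : @NormalSpace (X × X) (sorgenfreySq X)) {G A : Set (X × X)}
    (hG : IsAntichain (· ≤ ·) G) (hA : A ⊆ G) : ∃ H, IsGδ H ∧ G ∩ H = A := by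
  have hAc : IsClosed[sorgenfreySq X] A := isClosed_sorgenfreySq_of_isAntichain (hG.subset hA)
  have hGAc : IsClosed[sorgenfreySq X] (G \ A) :=
    isClosed_sorgenfreySq_of_isAntichain (hG.subset sdiff_subset)
  obtain ⟨U, V, hU, hV, hAU, hGV, hUV⟩ :=
    @normal_separation _ (sorgenfreySq X) hnorm _ _ hAc hGAc disjoint_sdiff_right
  obtain ⟨H, hH, hUH, hHV⟩ :=
    exists_isGδ_superset_disjoint (fun _ => mem_nhdsGE_of_isOpen_sorgenfreySq hU)
      (fun _ => mem_nhdsGE_of_isOpen_sorgenfreySq hV) hUV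
  refine ⟨H, hH, Subset.antisymm (fun p hp => ?_) (subset_inter hA (hAU.trans hUH))⟩
  by_contra hpA
  exact hHV.notMem_of_mem_left hp.2 (hGV ⟨hp.1, hpA⟩)

theorem isQSet_of_strictAnti {X Y : Set ℝ} (hnorm : @NormalSpace (X × X) (sorgenfreySq X))
    (hYX : Y ⊆ X) {f : Y → X} (hf : StrictAnti f) (hfc : Continuous f) : IsQSet Y := by
  intro A _
  let φ (y : Y) : X × X := (inclusion hYX y, f y)
  have hφ : Continuous φ := (continuous_inclusion hYX).prodMk hfc
  have hφinj : φ.Injective := fun y z h => inclusion_injective hYX (congrArg Prod.fst h)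
  have hanti : IsAntichain (· ≤ ·) (range φ) := isAntichain_range_prodMk (fun _ _ h => h) hf
  obtain ⟨H, hH, hHA⟩ := exists_isGδ_inter_eq_of_isAntichain hnorm hanti
    (image_subset_range φ (Subtype.val ⁻¹' A))
  have hpre : φ ⁻¹' H = Subtype.val ⁻¹' A := by
    rw [← hφinj.preimage_image (Subtype.val ⁻¹' A), ← hHA, preimage_range_inter]
  exact hpre ▸ hH.preimage hφ

theorem exists_isQSet_of_strictAntiOn {X Y : Set ℝ}
    (hnorm : @NormalSpace (X × X) (sorgenfreySq X)) (hYX : Y ⊆ X) (hY : ¬Y.Countable) {f : ℝ → ℝ}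
    (hf : StrictAntiOn f Y) (hfX : MapsTo f Y X) : ∃ Q ⊆ Y, ¬Q.Countable ∧ IsQSet Q := by
  let Q : Set ℝ := {y ∈ Y | ContinuousWithinAt f Y y}
  have hQY : Q ⊆ Y := sep_subset _ _
  have hdisc : (Y \ Q).Countable :=
    hf.antitoneOn.countable_not_continuousWithinAt.mono
      fun y (hy : y ∈ Y \ Q) => And.intro hy.1 fun hc => hy.2 ⟨hy.1, hc⟩
  have hfc : ContinuousOn f Q := fun y hy => hy.2.mono hQY
  have hfQ : StrictAnti (MapsTo.restrict f Q X (hfX.mono_left hQY)) :=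
    fun y z hyz => hf (hQY y.2) (hQY z.2) hyz
  refine ⟨Q, hQY, fun hQ => hY ?_,
    isQSet_of_strictAnti hnorm (hQY.trans hYX) hfQ (hfc.mapsToRestrict _)⟩
  exact (hQ.union hdisc).mono (union_sdiff_cancel hQY).ge

theorem aleph_one_le_mk_iff_not_countable {α : Type*} {s : Set α} : ℵ₁ ≤ #s ↔ ¬s.Countable := by
  rw [Cardinal.aleph_one_le_iff, ← not_le, Cardinal.le_aleph0_iff_set_countable]

theorem exists_not_countable_inter_of_subset_iUnion {α ι : Type*} [Countable ι] {Y : Set α}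
    {s : ι → Set α} (hY : ¬Y.Countable) (hs : Y ⊆ ⋃ i, s i) : ∃ i, ¬(Y ∩ s i).Countable := by
  contrapose! hY
  rw [← inter_eq_left.2 hs, inter_iUnion]
  exact countable_iUnion hY

theorem aleph1Dense_add {Y D : Set ℝ} (hY : #Y = ℵ₁) (hD : D.Countable) (hDd : Dense D) :
    Aleph1Dense (Y + D) := by
  intro a b hab
  refine le_antisymm ?_ (aleph_one_le_mk_iff_not_countable.2 fun hcount => ?_)
  · calc #↥((Y + D) ∩ Ioo a b) ≤ #↥(Y + D) := Cardinal.mk_le_mk_of_subset inter_subset_left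
      _ ≤ #Y * #D := Cardinal.mk_add_le
      _ ≤ ℵ₁ * ℵ₀ := mul_le_mul' hY.le hD.le_aleph0
      _ = ℵ₁ := Cardinal.aleph_mul_aleph0 1
  · have := hD.to_subtype
    have hcover : Y ⊆ ⋃ d : D, {y | y + d ∈ Ioo a b} := fun y _ => by
      obtain ⟨d, hd, had, hdb⟩ := hDd.exists_between (sub_lt_sub_right hab y)
      exact mem_iUnion.2 ⟨⟨d, hd⟩, sub_lt_iff_lt_add'.1 had, lt_sub_iff_add_lt'.1 hdb⟩
    obtain ⟨d, hd⟩ := exists_not_countable_inter_of_subset_iUnion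
      (aleph_one_le_mk_iff_not_countable.1 hY.ge) hcover
    refine hd (countable_of_injective_of_countable_image (add_left_injective (d : ℝ)).injOn
      (hcount.mono ?_))
    rintro _ ⟨y, ⟨hyY, hy⟩, rfl⟩
    exact ⟨add_mem_add hyY d.2, hy⟩

theorem exists_strictAntiOn_mapsTo_of_add {G : Type*} [AddGroup G] [Preorder G]
    [AddRightStrictMono G] {Y D : Set G} (hY : ¬Y.Countable) (hD : D.Countable) (hD0 : 0 ∈ D)
    {h : ↥(Y + D) → ↥(Y + D)} (hh : StrictAnti h) :
    ∃ T ⊆ Y, ¬T.Countable ∧ ∃ f : G → G, StrictAntiOn f T ∧ MapsTo f T Y := by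
  have := hD.to_subtype
  obtain ⟨g, hg⟩ : ∃ g : G → G, ∀ z : ↥(Y + D), g z = h z :=
    ⟨Subtype.val.extend (fun z => h z) id, Subtype.val_injective.extend_apply _ _⟩
  have hYD : Y ⊆ Y + D := subset_add_left Y hD0
  have hcover : Y ⊆ ⋃ d : D, {y | g y + -d ∈ Y} := fun y hy => by
    obtain ⟨y', hy', d, hd, hsum⟩ := (h ⟨y, hYD hy⟩).2
    have hgy : g y + -d = y' := by rw [hg ⟨y, hYD hy⟩, ← hsum, add_neg_cancel_right]
    exact mem_iUnion.2 ⟨⟨d, hd⟩, show g y + -d ∈ Y from hgy ▸ hy'⟩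
  obtain ⟨d, hd⟩ := exists_not_countable_inter_of_subset_iUnion hY hcover
  refine ⟨_, inter_subset_left, hd, fun y => g y + -d, fun y hy z hz hyz => ?_, fun y hy => hy.2⟩
  have hgyz : g z < g y := by
    rw [hg ⟨y, hYD hy.1⟩, hg ⟨z, hYD hz.1⟩]
    exact hh hyz
  exact add_lt_add_left hgyz _

theorem exists_strictAntiOn_mapsTo
    (hrev : ∀ Z : Set ℝ, Aleph1Dense Z → ∃ h : Z → Z, StrictAnti h) {X : Set ℝ}
    (hX : ¬X.Countable) :
    ∃ Y ⊆ X, ¬Y.Countable ∧ ∃ f : ℝ → ℝ, StrictAntiOn f Y ∧ MapsTo f Y X := by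
  obtain ⟨Y, hYX, hY⟩ :=
    Cardinal.le_mk_iff_exists_subset.1 (aleph_one_le_mk_iff_not_countable.2 hX)
  have hQ : (range ((↑) : ℚ → ℝ)).Countable := countable_range _
  obtain ⟨h, hh⟩ := hrev _ (aleph1Dense_add hY hQ Rat.denseRange_cast)
  obtain ⟨T, hTY, hT, f, hf, hfY⟩ := exists_strictAntiOn_mapsTo_of_add
    (aleph_one_le_mk_iff_not_countable.1 hY.ge) hQ ⟨0, Rat.cast_zero⟩ hh
  exact ⟨T, hTY.trans hYX, hT, f, hf, hfY.mono_right hYX⟩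

theorem Aleph1Dense.neg {Z : Set ℝ} (hZ : Aleph1Dense Z) : Aleph1Dense (-Z) := fun a b hab => by
  rw [← hZ (-b) (-a) (neg_lt_neg hab), ← neg_Ioo, ← Cardinal.mk_neg (Z ∩ _), inter_neg, neg_neg]

theorem BaumgartnerAxiom.exists_strictAnti (hBA : BaumgartnerAxiom) {Z : Set ℝ}
    (hZ : Aleph1Dense Z) : ∃ h : Z → Z, StrictAnti h := by
  obtain ⟨g⟩ := hBA Z (-Z) hZ hZ.neg
  refine ⟨fun z => ⟨-(g z : ℝ), (g z).2⟩, fun x y hxy => ?_⟩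
  have hg : (g x : ℝ) < g y := g.strictMono hxy
  exact neg_lt_neg hg

theorem stmt4_general (hrev : ∀ Z : Set ℝ, Aleph1Dense Z → ∃ h : Z → Z, StrictAnti h)
    {X : Set ℝ} (hX : ¬X.Countable) (hnorm : @NormalSpace (X × X) (sorgenfreySq X)) :
    ∃ Q : Set ℝ, Q ⊆ X ∧ ¬Q.Countable ∧ IsQSet Q := by
  obtain ⟨Y, hYX, hY, f, hf, hfX⟩ := exists_strictAntiOn_mapsTo hrev hX
  obtain ⟨Q, hQY, hQ, hQset⟩ := exists_isQSet_of_strictAntiOn hnorm hYX hY hf hfX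
  exact ⟨Q, hQY.trans hYX, hQ, hQset⟩

/-- BA implies that if `X` is an uncountable set of reals and
`(X[≤])²` is normal, then `X` contains an uncountable Q-set. -/
theorem stmt4 (hBA : BaumgartnerAxiom) (X : Set ℝ) (hX : ¬X.Countable)
    (hnorm : @NormalSpace (X × X) (sorgenfreySq X)) :
    ∃ Q : Set ℝ, Q ⊆ X ∧ ¬Q.Countable ∧ IsQSet Q :=
  stmt4_general (fun _ => hBA.exists_strictAnti) hX hnorm
end

section
/- Let E ⊆ ℝ be such that every strictly decreasing function f : A → E with A ⊆ E has countable domain A (i.e., E admits no uncountable strictly decreasing functions from a subset of E into E). Then (E[≤])² is a normal topological space. -/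
/-!
The minimal points of a set `S ⊆ E × E` in the product order form an antichain, that is, the graph
of a strictly decreasing function from a subset of `E` into `E`, so there are only countably many
of them. Second countability of the line provides countably many further points of `S` below
all the non-minimal ones, so `S` has a countable coinitial subset.

A Sorgenfrey neighbourhood of `p` is a Euclidean neighbourhood intersected with the upper cone of
`p`. Sorting the points of `S` by a Euclidean basic open set that witnesses membership in a given
cover, and covering each of the countably many classes by means of a countable coinitial subset,
shows that `(E[≤])²` is hereditarily Lindelöf. It is also regular, hence normal.
-/

open Set Filter Topology TopologicalSpace

section Antichain

variable {α β : Type*} [Preorder α] [LinearOrder β]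

lemma injOn_fst_of_isAntichain {R : Set (α × β)} (hR : IsAntichain (· ≤ ·) R) :
    InjOn Prod.fst R := by
  intro p hp q hq h
  rcases le_total p.2 q.2 with h' | h'
  · exact hR.eq hp hq ⟨h.le, h'⟩
  · exact hR.eq' hp hq ⟨h.ge, h'⟩

lemma snd_lt_snd_of_isAntichain {R : Set (α × β)} (hR : IsAntichain (· ≤ ·) R)
    {p q : α × β} (hp : p ∈ R) (hq : q ∈ R) (h : p.1 < q.1) : q.2 < p.2 := by
  by_contra! h'
  exact h.ne (congrArg Prod.fst (hR.eq hp hq ⟨h.le, h'⟩))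

lemma countable_of_isAntichain {E F : Set ℝ}
    (hEF : ∀ A ⊆ E, ∀ f : ℝ → ℝ, StrictAntiOn f A → MapsTo f A F → A.Countable)
    {R : Set (E × F)} (hR : IsAntichain (· ≤ ·) R) : R.Countable := by
  let x : R → ℝ := fun p ↦ p.1.1
  let y : R → ℝ := fun p ↦ p.1.2
  have hx : Function.Injective x :=
    Subtype.val_injective.comp (injOn_iff_injective.1 (injOn_fst_of_isAntichain hR))
  let f : ℝ → ℝ := Function.extend x y 0
  have hf (p : R) : f (x p) = y p := hx.extend_apply y 0 p
  have hanti : StrictAntiOn f (range x) := by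
    rintro _ ⟨p, rfl⟩ _ ⟨q, rfl⟩ hpq
    rw [hf, hf]
    exact snd_lt_snd_of_isAntichain hR p.2 q.2 hpq
  have hmaps : MapsTo f (range x) F := by
    rintro _ ⟨p, rfl⟩
    rw [hf]
    exact p.1.2.2
  have hrange : (range x).Countable :=
    hEF _ (range_subset_iff.2 fun p ↦ p.1.1.2) f hanti hmaps
  exact ((Equiv.ofInjective x hx).countable_iff).2 hrange

end Antichain

section Coinitial

variable {α β : Type*} [LinearOrder α] [LinearOrder β]

lemma exists_countable_fst_lt_and_snd_lt
    [TopologicalSpace α] [SecondCountableTopology α] [ClosedIicTopology α]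
    [TopologicalSpace β] [SecondCountableTopology β] [ClosedIicTopology β] (S : Set (α × β)) :
    ∃ C ⊆ S, C.Countable ∧
      ∀ p ∈ S, ∀ q : α × β, p.1 < q.1 → p.2 < q.2 → ∃ c ∈ C, c.1 < q.1 ∧ c.2 < q.2 := by
  obtain ⟨C, hCS, hC, hUnion⟩ := isOpen_biUnion_countable S
    (fun p ↦ Ioi p.1 ×ˢ Ioi p.2) fun _ _ ↦ isOpen_Ioi.prod isOpen_Ioi
  refine ⟨C, hCS, hC, fun p hp q h₁ h₂ ↦ ?_⟩
  have hq : q ∈ ⋃ c ∈ C, Ioi c.1 ×ˢ Ioi c.2 := hUnion ▸ mem_biUnion hp ⟨h₁, h₂⟩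
  simpa only [mem_iUnion₂, mem_prod, mem_Ioi, exists_prop] using hq

lemma exists_countable_le_of_fst_eq
    [TopologicalSpace β] [SecondCountableTopology β] [ClosedIicTopology β] {T : Set (α × β)}
    (hT : ∀ p ∈ T, ∀ q ∈ T, p.1 < q.1 → q.2 ≤ p.2) :
    ∃ C ⊆ T, C.Countable ∧
      ∀ p ∈ T, ∀ q ∈ T, p.1 = q.1 → p.2 < q.2 → ∃ c ∈ C, c ≤ q := by
  -- By `hT`, for each basic open set `V` there is at most one column of `T` in which `V` contains
  -- a point and lies strictly above another one, so one lower point for each `V` suffices.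
  let Separates (V : Set β) (c : α × β) : Prop :=
    c ∈ T ∧ V ⊆ Ioi c.2 ∧ ∃ d ∈ T, c.1 = d.1 ∧ d.2 ∈ V
  let 𝒱 : Set (Set β) := {V ∈ countableBasis β | ∃ c, Separates V c}
  have : Countable 𝒱 := ((countable_countableBasis β).mono (sep_subset _ _)).to_subtype
  choose c hc using fun V : 𝒱 ↦ V.2.2
  refine ⟨range c, range_subset_iff.2 fun V ↦ (hc V).1, countable_range c,
    fun p hp q hq h₁ h₂ ↦ ?_⟩
  obtain ⟨V, hVB, hqV, hVp⟩ :=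
    (isBasis_countableBasis β).exists_subset_of_mem_open (mem_Ioi.2 h₂) isOpen_Ioi
  let W : 𝒱 := ⟨V, hVB, p, hp, hVp, q, hq, h₁, hqV⟩
  obtain ⟨-, hVc, d, hd, hcd, hdV⟩ := hc W
  refine ⟨c W, mem_range_self W, ?_, (hVc hqV).le⟩
  by_contra! hlt
  have hpd : p.1 < d.1 := by rwa [h₁, ← hcd]
  exact (hT p hp d hd hpd).not_gt (hVp hdV)

lemma exists_countable_le_of_snd_eq
    [TopologicalSpace α] [SecondCountableTopology α] [ClosedIicTopology α] {T : Set (α × β)}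
    (hT : ∀ p ∈ T, ∀ q ∈ T, p.1 < q.1 → q.2 ≤ p.2) :
    ∃ C ⊆ T, C.Countable ∧
      ∀ p ∈ T, ∀ q ∈ T, p.2 = q.2 → p.1 < q.1 → ∃ c ∈ C, c ≤ q := by
  have hT' : ∀ p ∈ Prod.swap ⁻¹' T, ∀ q ∈ Prod.swap ⁻¹' T, p.1 < q.1 → q.2 ≤ p.2 :=
    fun p hp q hq h ↦ le_of_not_gt fun h' ↦ (hT _ hp _ hq h').not_gt h
  obtain ⟨C, hCT, hC, hle⟩ := exists_countable_le_of_fst_eq hT'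
  refine ⟨Prod.swap '' C, image_subset_iff.2 hCT, hC.image _, fun p hp q hq h₂ h₁ ↦ ?_⟩
  obtain ⟨c, hc, hcq⟩ := hle p.swap hp q.swap hq h₂ h₁
  exact ⟨c.swap, mem_image_of_mem _ hc, Prod.swap_le_swap.1 hcq⟩

lemma exists_countable_isCoinitialFor_of_countable_minimal
    [TopologicalSpace α] [SecondCountableTopology α] [ClosedIicTopology α]
    [TopologicalSpace β] [SecondCountableTopology β] [ClosedIicTopology β] {S : Set (α × β)}
    (hS : {q | Minimal (· ∈ S) q}.Countable) :
    ∃ C ⊆ S, C.Countable ∧ IsCoinitialFor S C := by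
  let T : Set (α × β) := {q ∈ S | ∀ p ∈ S, p.1 < q.1 → q.2 ≤ p.2}
  have hT : ∀ p ∈ T, ∀ q ∈ T, p.1 < q.1 → q.2 ≤ p.2 := fun p hp q hq ↦ hq.2 p hp.1
  obtain ⟨C₁, hC₁S, hC₁, hle₁⟩ := exists_countable_fst_lt_and_snd_lt S
  obtain ⟨C₂, hC₂T, hC₂, hle₂⟩ := exists_countable_le_of_fst_eq hT
  obtain ⟨C₃, hC₃T, hC₃, hle₃⟩ := exists_countable_le_of_snd_eq hT
  have hTS : T ⊆ S := sep_subset _ _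
  refine ⟨{q | Minimal (· ∈ S) q} ∪ (C₁ ∪ (C₂ ∪ C₃)),
    union_subset (fun q hq ↦ hq.prop)
      (union_subset hC₁S (union_subset (hC₂T.trans hTS) (hC₃T.trans hTS))),
    hS.union (hC₁.union (hC₂.union hC₃)), fun q hq ↦ ?_⟩
  by_cases hmin : Minimal (· ∈ S) q
  · exact ⟨q, .inl hmin, le_rfl⟩
  obtain ⟨p, hpq, hp⟩ := (not_minimal_iff_exists_lt hq).1 hmin
  by_cases hqT : q ∈ T
  · have hpT : p ∈ T := ⟨hp, fun r hr hrp ↦ hpq.le.2.trans (hqT.2 r hr (hrp.trans_le hpq.le.1))⟩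
    rcases hpq.le.1.eq_or_lt with h₁ | h₁
    · have h₂ : p.2 < q.2 := hpq.le.2.lt_of_ne fun h₂ ↦ hpq.ne (Prod.ext h₁ h₂)
      obtain ⟨c, hc, hcq⟩ := hle₂ p hpT q hqT h₁ h₂
      exact ⟨c, .inr (.inr (.inl hc)), hcq⟩
    · obtain ⟨c, hc, hcq⟩ := hle₃ p hpT q hqT (hpq.le.2.antisymm (hqT.2 p hp h₁)) h₁
      exact ⟨c, .inr (.inr (.inr hc)), hcq⟩
  · obtain ⟨r, hr, h₁, h₂⟩ : ∃ r ∈ S, r.1 < q.1 ∧ r.2 < q.2 := by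
      simpa only [T, mem_sep_iff, hq, true_and, not_forall, not_le, exists_prop] using hqT
    obtain ⟨c, hc, hcq₁, hcq₂⟩ := hle₁ r hr q h₁ h₂
    exact ⟨c, .inr (.inl hc), hcq₁.le, hcq₂.le⟩

end Coinitial

section NhdsGE

variable {X : Type*} [Preorder X]

lemma exists_countable_subcover_of_inter_Ici_subset
    (hX : ∀ S : Set X, ∃ C ⊆ S, C.Countable ∧ IsCoinitialFor S C)
    {ι : Type*} (U : ι → Set X) (V : Set X) :
    ∃ J : Set ι, J.Countable ∧ {x ∈ V | ∃ i, V ∩ Ici x ⊆ U i} ⊆ ⋃ i ∈ J, U i := by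
  obtain ⟨C, hCS, hC, hcoinit⟩ := hX {x ∈ V | ∃ i, V ∩ Ici x ⊆ U i}
  choose i hi using fun c : C ↦ (hCS c.2).2
  have := hC.to_subtype
  refine ⟨range i, countable_range i, fun x hx ↦ ?_⟩
  obtain ⟨c, hc, hcx⟩ := hcoinit hx
  exact mem_biUnion (mem_range_self ⟨c, hc⟩) (hi ⟨c, hc⟩ ⟨hx.1, hcx⟩)

variable {τ : TopologicalSpace X} [σ : TopologicalSpace X]

lemma regularSpace_of_nhds_eq_nhdsGE [RegularSpace X] [ClosedIciTopology X]
    (hτ : ∀ x, @nhds X τ x = 𝓝[≥] x) : @RegularSpace X τ := by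
  have hle : τ ≤ σ := le_of_nhds_le_nhds fun x ↦ (hτ x).trans_le nhdsWithin_le_nhds
  have hbasis (x : X) : (@nhds X τ x).HasBasis (fun V ↦ V ∈ 𝓝 x ∧ IsClosed V) (· ∩ Ici x) :=
    hτ x ▸ (closed_nhds_basis x).inf_principal (Ici x)
  exact @RegularSpace.of_hasBasis X τ _ _ _ hbasis
    fun x V hV ↦ (hV.2.inter isClosed_Ici).mono hle

lemma hereditarilyLindelofSpace_of_nhds_eq_nhdsGE [SecondCountableTopology X]
    (hτ : ∀ x, @nhds X τ x = 𝓝[≥] x)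
    (hX : ∀ S : Set X, ∃ C ⊆ S, C.Countable ∧ IsCoinitialFor S C) :
    @HereditarilyLindelofSpace X τ := by
  refine @HereditarilyLindelofSpace.mk X τ fun S _ ↦
    @isLindelof_of_countable_subcover X τ S fun {ι} U hU hSU ↦ ?_
  choose J hJ hcover using exists_countable_subcover_of_inter_Ici_subset hX U
  refine ⟨⋃ V ∈ countableBasis X, J V, (countable_countableBasis X).biUnion fun V _ ↦ hJ V, ?_⟩
  intro x hx
  obtain ⟨i, hxi⟩ := mem_iUnion.1 (hSU hx)
  have hUi : U i ∈ 𝓝[≥] x := hτ x ▸ @IsOpen.mem_nhds X τ x (U i) (hU i) hxi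
  obtain ⟨V, ⟨hVB, hxV⟩, hVU⟩ :=
    (nhdsWithin_hasBasis (isBasis_countableBasis X).nhds_hasBasis _).mem_iff.1 hUi
  exact biUnion_subset_biUnion_left (subset_biUnion_of_mem hVB) (hcover V ⟨hxV, i, hVU⟩)

end NhdsGE

section Sorgenfrey

lemma nhds_sorgenfrey (x : ℝ) : @nhds ℝ sorgenfrey x = 𝓝[≥] x := by
  rw [sorgenfrey, nhds_generateFrom]
  refine le_antisymm ?_ (le_iInf₂ ?_)
  · rw [(nhdsGE_basis_Ico x).eq_biInf]
    exact le_iInf₂ fun b hb ↦ iInf₂_le _ ⟨left_mem_Ico.2 hb, x, b, hb, rfl⟩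
  · rintro _ ⟨hx, a, b, -, rfl⟩
    exact le_principal_iff.2 (Ico_mem_nhdsGE_of_mem hx)

variable (E : Set ℝ)

lemma nhds_sorgenfreySub (x : E) : @nhds E (sorgenfreySub E) x = 𝓝[≥] x := by
  rw [sorgenfreySub, @nhds_induced _ _ sorgenfrey, nhds_sorgenfrey, nhdsWithin, nhdsWithin,
    nhds_subtype, comap_inf, comap_principal]
  rfl

lemma nhds_sorgenfreySq (p : E × E) : @nhds (E × E) (sorgenfreySq E) p = 𝓝[≥] p := by
  rw [sorgenfreySq, @nhds_prod_eq _ _ (sorgenfreySub E) (sorgenfreySub E), nhds_sorgenfreySub,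
    nhds_sorgenfreySub, ← nhdsWithin_prod_eq, Ici_prod_eq]

lemma regularSpace_sorgenfreySq : @RegularSpace (E × E) (sorgenfreySq E) :=
  regularSpace_of_nhds_eq_nhdsGE (nhds_sorgenfreySq E)

lemma hereditarilyLindelofSpace_sorgenfreySq
    (hE : ∀ A ⊆ E, ∀ f : ℝ → ℝ, StrictAntiOn f A → MapsTo f A E → A.Countable) :
    @HereditarilyLindelofSpace (E × E) (sorgenfreySq E) := by
  refine hereditarilyLindelofSpace_of_nhds_eq_nhdsGE (nhds_sorgenfreySq E) fun S ↦ ?_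
  have hmin : {q | Minimal (· ∈ S) q}.Countable :=
    countable_of_isAntichain hE (setOfPred_minimal_antichain (· ∈ S))
  exact exists_countable_isCoinitialFor_of_countable_minimal hmin

end Sorgenfrey

/-- If every strictly decreasing function from a subset of `E`
into `E` has countable domain, then `(E[≤])²` is normal. -/
theorem stmt10 (E : Set ℝ)
    (hE : ∀ A : Set ℝ, A ⊆ E → ∀ f : ℝ → ℝ,
      StrictAntiOn f A → Set.MapsTo f A E → A.Countable) :
    @NormalSpace (E × E) (sorgenfreySq E) := by
  let _ := sorgenfreySq E
  have := regularSpace_sorgenfreySq E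
  have := hereditarilyLindelofSpace_sorgenfreySq E hE
  exact NormalSpace.of_regularSpace_lindelofSpace
end
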